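/- arXiv:1003.1179 — 4 statements merged into one kernel-verified Lean document; each statement's English description precedes it below -/
import Mathlib

section
/- Characterization of non-capturing annotations (Lemma 'captures2'): An annotation ann fails to capture ⟨A_s, A_t⟩ if and only if there exist a word c_1⋯c_k accepted by A_s and a sequence P_0, …, P_k of subsets of σ_t such that P_0 = A_t.start, P_k ∩ A_t.accept = ∅, and for each i ∈ {1,…,k}: if c_i = Sum.inr b then P_i = ⋃_{p ∈ P_{i-1}} A_t.step p b, and if c_i = Sum.inl a then for every p ∈ P_{i-1} and every p' with (p, p', a) ∈ ann, one has p' ∈ P_i. -/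
/-!
For a fixed word `w`, each letter gives a one-step relation on the states of `At`
(`letterStep`): the annotation on source letters, the transitions of `At` on target letters.
Capturing says that every accepted word has a run along these relations from a start state to
an accepting state.

If some accepted word has no such run, let `P i` be the set of states reachable after `i`
letters (`reachSet`). Each `P (i + 1)` is exactly the image of `P i` under the `i`-th step
relation (`mem_reachSet_succ`), so both letter conditions hold, and an accepting state in the
last set would give a run. Conversely, given sets `P i` closed under the step relations, any run
stays inside them by induction, so it cannot end in an accepting state.
-/

/-- An annotation `ann` captures the mapping given by the source NFA `As` (over `α ⊕ β`)
and the target NFA `At` (over `β`): for every word accepted by `As` there is a run of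
states of `At` starting in an initial state, ending in an accepting state, that follows
the transitions of `At` on target letters and the annotation on source letters. -/
def AnnCaptures {α β σs σt : Type*} (As : NFA (α ⊕ β) σs) (At : NFA β σt)
    (ann : Set (σt × σt × α)) : Prop :=
  ∀ w ∈ As.accepts, ∃ p : Fin (w.length + 1) → σt,
    p 0 ∈ At.start ∧ p (Fin.last w.length) ∈ At.accept ∧
    ∀ i : Fin w.length,
      match w.get i with
      | Sum.inl a => (p i.castSucc, p i.succ, a) ∈ ann
      | Sum.inr b => p i.succ ∈ At.step (p i.castSucc) b

/-- The one-step relation on states of `At` induced by a letter: the annotation for source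
letters, the transition relation of `At` for target letters. -/
def letterStep {α β σt : Type*} (At : NFA β σt) (ann : Set (σt × σt × α)) (c : α ⊕ β)
    (p q : σt) : Prop :=
  match c with
  | Sum.inl a => (p, q, a) ∈ ann
  | Sum.inr b => q ∈ At.step p b

/-- The states reachable from `S` by the first `i` of the relations `R 0, …, R (n - 1)`.
The witnessing run is a total function on `Fin (n + 1)`, constrained only up to index `i`. -/
def reachSet {σ : Type*} {n : ℕ} (S : Set σ) (R : Fin n → σ → σ → Prop) (i : Fin (n + 1)) :
    Set σ :=
  {q | ∃ p : Fin (n + 1) → σ, p 0 ∈ S ∧ p i = q ∧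
    ∀ j : Fin n, j.castSucc < i → R j (p j.castSucc) (p j.succ)}

lemma reachSet_zero {σ : Type*} {n : ℕ} (S : Set σ) (R : Fin n → σ → σ → Prop) :
    reachSet S R 0 = S := by
  ext q
  constructor
  · rintro ⟨p, h0, rfl, -⟩
    exact h0
  · intro hq
    exact ⟨fun _ => q, hq, rfl, fun j hj => absurd hj (Fin.not_lt_zero _)⟩

lemma mem_reachSet_succ {σ : Type*} {n : ℕ} (S : Set σ) (R : Fin n → σ → σ → Prop)
    (i : Fin n) (q : σ) :
    q ∈ reachSet S R i.succ ↔ ∃ p ∈ reachSet S R i.castSucc, R i p q := by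
  constructor
  · rintro ⟨p, h0, rfl, h⟩
    exact ⟨p i.castSucc, ⟨p, h0, rfl, fun j hj => h j (hj.trans i.castSucc_lt_succ)⟩,
      h i i.castSucc_lt_succ⟩
  · rintro ⟨_, ⟨p, h0, rfl, h⟩, hR⟩
    -- Follow the given run up to index `i`, then stay at `q`.
    refine ⟨fun k => if k ≤ i.castSucc then p k else q, ?_, ?_, ?_⟩
    · simpa using h0
    · simp [Fin.le_def]
    · intro j hj
      have hji : j ≤ i := by
        simp only [Fin.lt_def, Fin.le_def, Fin.val_castSucc, Fin.val_succ] at hj ⊢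
        omega
      rcases hji.lt_or_eq with hlt | rfl
      · have h1 : j.castSucc ≤ i.castSucc := hji
        have h2 : j.succ ≤ i.castSucc := by
          simp only [Fin.lt_def, Fin.le_def, Fin.val_castSucc, Fin.val_succ] at hlt ⊢
          omega
        simpa only [if_pos h1, if_pos h2] using h j hlt
      · have h2 : ¬ j.succ ≤ j.castSucc := by simp [Fin.le_def]
        simpa only [if_pos le_rfl, if_neg h2] using hR

/-- Lemma "captures2": characterization of annotations that do *not* capture the mapping
`⟨As, At⟩`, in terms of a word accepted by `As` together with a sequence of sets of states
of `At` starting at the set of initial states, ending disjoint from the accepting states,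
computed by the subset construction on target letters and closed under the annotation on
source letters. -/
theorem annotation_not_capturing_iff {α β σs σt : Type*}
    (As : NFA (α ⊕ β) σs) (At : NFA β σt) (ann : Set (σt × σt × α)) :
    ¬ AnnCaptures As At ann ↔
      ∃ w ∈ As.accepts, ∃ P : Fin (w.length + 1) → Set σt,
        P 0 = At.start ∧
        P (Fin.last w.length) ∩ At.accept = ∅ ∧
        ∀ i : Fin w.length,
          match w.get i with
          | Sum.inl a => ∀ p ∈ P i.castSucc, ∀ p', (p, p', a) ∈ ann → p' ∈ P i.succ
          | Sum.inr b => P i.succ = ⋃ p ∈ P i.castSucc, At.step p b := by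
  constructor
  · intro hnot
    unfold AnnCaptures at hnot
    push Not at hnot
    obtain ⟨w, hw, hrun⟩ := hnot
    let R : Fin w.length → σt → σt → Prop := fun i => letterStep At ann (w.get i)
    refine ⟨w, hw, reachSet At.start R, reachSet_zero _ _, ?_, ?_⟩
    · rw [Set.eq_empty_iff_forall_notMem]
      rintro _ ⟨⟨p, h0, rfl, h⟩, hacc⟩
      obtain ⟨i, hi⟩ := hrun p h0 hacc
      exact hi (h i i.castSucc_lt_last)
    · intro i
      have key := mem_reachSet_succ At.start R i
      simp only [R, letterStep] at key
      split <;> rename_i c hc <;> simp only [hc] at key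
      · exact fun p hp q hq => (key q).2 ⟨p, hp, hq⟩
      · ext q
        simp only [Set.mem_iUnion, exists_prop]
        exact key q
  · rintro ⟨w, hw, P, hP0, hPlast, hP⟩ hcap
    obtain ⟨p, h0, hacc, hp⟩ := hcap w hw
    have hmem : ∀ i, p i ∈ P i := by
      intro i
      induction i using Fin.induction with
      | zero => rwa [hP0]
      | succ i ih =>
        have hPi := hP i
        have hpi := hp i
        split at hPi <;> rename_i c hc <;> simp only [hc] at hpi
        · exact hPi _ ih _ hpi
        · rw [hPi]
          exact Set.mem_biUnion ih hpi
    exact (Set.eq_empty_iff_forall_notMem.1 hPlast) _ ⟨hmem _, hacc⟩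
end

section
/- Correct annotations and capturing views (Lemma 'captures1', precise form): Let A_s be an NFA over α ⊕ β and A_t an NFA over β, let V : α → Language β be views with V(a) ≠ ∅ for every a ∈ α, and let ann_V = {(p, p', a) : ∃ w ∈ V(a), p' ∈ A_t.evalFrom {p} w} be the unique annotation that is correct for V. Then: (i) if s[V] ⊆ L(A_t) for every word s accepted by A_s, then ann_V captures ⟨A_s, A_t⟩; and (ii) if in addition for every a ∈ α all words of V(a) are pairwise congruent for A_t (i.e., R_{A_t}(w) = R_{A_t}(w') for all w, w' ∈ V(a)), then the converse holds: if ann_V captures ⟨A_s, A_t⟩, then s[V] ⊆ L(A_t) for every word s accepted by A_s. -/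
/-!
Both parts compare a word `s` over `α ⊕ β` with the words of `s[V]`, letter by letter.

For (i), nonemptiness of the views gives a word `x ∈ s[V]`, and an accepting run of `At` on `x`
can be cut at the boundaries between the factors of `x`; the states at the cuts form an
annotated run along `s` (`exists_run_of_mem_subst`).

For (ii), an annotated run along `s` gives, for each source letter `a`, some word of `V a`
connecting the two neighbouring states. By congruence every word of `V a` connects them, so every
word of `s[V]` is read from the first to the last state of the run (`mem_evalFrom_of_run`).
-/

/-- Substituted letter: a source letter is replaced by its view, a target letter by itself. -/
def viewHat {α β : Type*} (V : α → Language β) : α ⊕ β → Language β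
  | Sum.inl a => V a
  | Sum.inr b => {[b]}

/-- Substitution `s[V]` of views into a word over the combined alphabet. -/
def subst {α β : Type*} (V : α → Language β) (s : List (α ⊕ β)) : Language β :=
  (s.map (viewHat V)).prod

/-- The transition relation of the word `w` on the NFA `A`. -/
def transRel {β σ : Type*} (A : NFA β σ) (w : List β) : Set (σ × σ) :=
  {pq | pq.2 ∈ A.evalFrom {pq.1} w}

/-- The unique annotation that is correct for the views `V` with respect to the NFA `At`:
it contains `(p, p', a)` iff some word of `V a` leads `At` from `p` to `p'`. -/
def annOf {α β σt : Type*} (At : NFA β σt) (V : α → Language β) : Set (σt × σt × α) :=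
  {t | ∃ w ∈ V t.2.2, t.2.1 ∈ At.evalFrom {t.1} w}

/-- Some word of the substituted letter `c` leads `At` from `p` to `q`. For a target letter this is
a transition of `At`, for a source letter it is membership in `annOf At V`. -/
def LetterStep {α β σt : Type*} (At : NFA β σt) (V : α → Language β)
    (c : α ⊕ β) (p q : σt) : Prop :=
  ∃ w ∈ viewHat V c, q ∈ At.evalFrom {p} w

/-- The condition that `AnnCaptures` imposes on a single position, for the annotation `annOf At V`,
is `LetterStep`. -/
theorem letterStep_iff {α β σt : Type*} (At : NFA β σt) (V : α → Language β)
    (c : α ⊕ β) (p q : σt) :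
    LetterStep At V c p q ↔
      match c with
      | Sum.inl a => (p, q, a) ∈ annOf At V
      | Sum.inr b => q ∈ At.step p b := by
  cases c with
  | inl a => rfl
  | inr b =>
    constructor
    · rintro ⟨w, hw, hq⟩
      have hw' : w = [b] := hw
      subst w
      simpa using hq
    · intro hq
      exact ⟨[b], rfl, by simpa using hq⟩

theorem mem_subst_cons {α β : Type*} (V : α → Language β) (c : α ⊕ β) (s : List (α ⊕ β))
    (x : List β) :
    x ∈ subst V (c :: s) ↔ ∃ u ∈ viewHat V c, ∃ v ∈ subst V s, u ++ v = x := by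
  simp only [subst, List.map_cons, List.prod_cons, Language.mem_mul]

theorem mem_evalFrom_append {β σ : Type*} (A : NFA β σ) (p q : σ) (u v : List β) :
    q ∈ A.evalFrom {p} (u ++ v) ↔ ∃ r ∈ A.evalFrom {p} u, q ∈ A.evalFrom {r} v := by
  rw [NFA.evalFrom_append, NFA.mem_evalFrom_iff_exists]

theorem exists_mem_subst {α β : Type*} (V : α → Language β) (hne : ∀ a, V a ≠ 0)
    (s : List (α ⊕ β)) : ∃ x, x ∈ subst V s := by
  induction s with
  | nil => exact ⟨[], rfl⟩
  | cons c s ih =>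
    obtain ⟨v, hv⟩ := ih
    have hc : ∃ u, u ∈ viewHat V c := by
      cases c with
      | inl a => exact Set.nonempty_iff_ne_empty.mpr (hne a)
      | inr b => exact ⟨[b], rfl⟩
    obtain ⟨u, hu⟩ := hc
    exact ⟨u ++ v, (mem_subst_cons V c s _).mpr ⟨u, hu, v, hv, rfl⟩⟩

/-- A run of `At` on a word of `s[V]`, cut at the boundaries of the substituted letters. -/
theorem exists_run_of_mem_subst {α β σt : Type*} (At : NFA β σt) (V : α → Language β)
    (s : List (α ⊕ β)) (x : List β) (hx : x ∈ subst V s) (p₀ q : σt)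
    (hq : q ∈ At.evalFrom {p₀} x) :
    ∃ p : Fin (s.length + 1) → σt, p 0 = p₀ ∧ p (Fin.last s.length) = q ∧
      ∀ i : Fin s.length, LetterStep At V (s.get i) (p i.castSucc) (p i.succ) := by
  induction s generalizing x p₀ with
  | nil =>
    have hx' : x = [] := hx
    subst x
    have hq' : q = p₀ := by simpa using hq
    exact ⟨fun _ => p₀, rfl, hq'.symm, fun i => i.elim0⟩
  | cons c s ih =>
    obtain ⟨u, hu, v, hv, rfl⟩ := (mem_subst_cons V c s x).mp hx
    obtain ⟨r, hr, hq⟩ := (mem_evalFrom_append At p₀ q u v).mp hq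
    obtain ⟨p, hp0, hpl, hp⟩ := ih v hv r hq
    refine ⟨Fin.cons p₀ p, rfl, hpl, fun i => ?_⟩
    refine Fin.cases ?_ (fun j => ?_) i
    · have hr' : p 0 ∈ At.evalFrom {p₀} u := hp0 ▸ hr
      exact ⟨u, hu, hr'⟩
    · exact hp j

/-- When the words of each view are pairwise congruent for `At`, an annotated run along `s` is
followed by every word of `s[V]`. -/
theorem mem_evalFrom_of_run {α β σt : Type*} (At : NFA β σt) (V : α → Language β)
    (hcong : ∀ a : α, ∀ w ∈ V a, ∀ w' ∈ V a, transRel At w = transRel At w')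
    (s : List (α ⊕ β)) (p : Fin (s.length + 1) → σt)
    (hp : ∀ i : Fin s.length, LetterStep At V (s.get i) (p i.castSucc) (p i.succ))
    (x : List β) (hx : x ∈ subst V s) :
    p (Fin.last s.length) ∈ At.evalFrom {p 0} x := by
  induction s generalizing x with
  | nil =>
    have hx' : x = [] := hx
    subst x
    exact rfl
  | cons c s ih =>
    obtain ⟨u, hu, v, hv, rfl⟩ := (mem_subst_cons V c s x).mp hx
    refine (mem_evalFrom_append At _ _ u v).mpr ⟨p (Fin.succ 0), ?_, ?_⟩
    · obtain ⟨w, hw, hq⟩ : LetterStep At V c (p 0) (p (Fin.succ 0)) := hp 0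
      have huw : transRel At w = transRel At u := by
        cases c with
        | inl a => exact hcong a w hw u hu
        | inr b =>
          have hw' : w = [b] := hw
          have hu' : u = [b] := hu
          rw [hw', hu']
      have hmem : (p 0, p (Fin.succ 0)) ∈ transRel At w := hq
      rw [huw] at hmem
      exact hmem
    · exact ih (fun i => p i.succ) (fun i => hp i.succ) v hv

/-- Lemma "captures1" (precise form): for nonempty views `V`,
(i) if every substituted word `s[V]` (for `s` accepted by `As`) is contained in `L(At)`,
then the annotation `annOf At V` captures `⟨As, At⟩`; and
(ii) if moreover for each `a` all words of `V a` are pairwise congruent for `At`,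
then the converse implication holds as well. -/
theorem captures1 {α β σs σt : Type*} (As : NFA (α ⊕ β) σs) (At : NFA β σt)
    (V : α → Language β) (hne : ∀ a, V a ≠ 0) :
    ((∀ s ∈ As.accepts, subst V s ≤ At.accepts) → AnnCaptures As At (annOf At V)) ∧
    ((∀ a : α, ∀ w ∈ V a, ∀ w' ∈ V a, transRel At w = transRel At w') →
      AnnCaptures As At (annOf At V) →
      ∀ s ∈ As.accepts, subst V s ≤ At.accepts) := by
  constructor
  · intro h s hs
    obtain ⟨x, hx⟩ := exists_mem_subst V hne s
    obtain ⟨q, hacc, hq⟩ := At.mem_accepts.mp (h s hs hx)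
    obtain ⟨p₀, hp₀, hq⟩ := NFA.mem_evalFrom_iff_exists.mp hq
    obtain ⟨p, hp0, hpl, hp⟩ := exists_run_of_mem_subst At V s x hx p₀ q hq
    exact ⟨p, hp0 ▸ hp₀, hpl ▸ hacc, fun i => (letterStep_iff At V _ _ _).mp (hp i)⟩
  · intro hcong h s hs x hx
    obtain ⟨p, hp0, hpl, hp⟩ := h s hs
    have hrun := mem_evalFrom_of_run At V hcong s p
      (fun i => (letterStep_iff At V _ _ _).mpr (hp i)) x hx
    exact At.mem_accepts.mpr ⟨_, hpl, NFA.mem_evalFrom_iff_exists.mpr ⟨_, hp0, hrun⟩⟩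
end

section
/- Reduction of a set of mappings to a single mapping (Theorem 'rpqs-single-mapping'): Let ⟨L_{0,s}, L_{0,t}⟩, …, ⟨L_{h,s}, L_{h,t}⟩ be mappings, where each L_{i,s} is a language over α ⊕ β and each L_{i,t} is a language over β. Over the extended target alphabet Option β (with the fresh separator symbol # = none and β embedded via some), define the lift of a language L over β as {s.map some : s ∈ L}, the lift of a language over α ⊕ β via the letter map Sum.inl a ↦ Sum.inl a, Sum.inr b ↦ Sum.inr (some b), and define the combined mapping L_{M,s} = lift(L_{0,s}) · {[Sum.inr none]} · lift(L_{1,s}) · {[Sum.inr none]} ⋯ {[Sum.inr none]} · lift(L_{h,s}) and L_{M,t} = lift(L_{0,t}) · {[none]} · lift(L_{1,t}) · {[none]} ⋯ {[none]} · lift(L_{h,t}). For views V : α → Language β let V↑ : α → Language (Option β) be given by V↑(a) = lift(V(a)). Then V↑ captures ⟨L_{M,s}, L_{M,t}⟩ if and only if V captures ⟨L_{i,s}, L_{i,t}⟩ for every i ∈ {0,…,h}; and V↑ exactly captures ⟨L_{M,s}, L_{M,t}⟩ if and only if V exactly captures ⟨L_{i,s}, L_{i,t}⟩ for every i ∈ {0,…,h}.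 -/
/-- Substitution `L_s[V]` of views into a source language. -/
def langSubst {α β : Type*} (V : α → Language β) (Ls : Language (α ⊕ β)) : Language β :=
  ⋃ s ∈ Ls, subst V s

/-- Views `V` capture the mapping `⟨L_s, L_t⟩`. -/
def Captures {α β : Type*} (V : α → Language β) (Ls : Language (α ⊕ β))
    (Lt : Language β) : Prop :=
  langSubst V Ls ≤ Lt ∧ langSubst V Ls ≠ 0

/-- Views `V` exactly capture the mapping `⟨L_s, L_t⟩`. -/
def ExactCaptures {α β : Type*} (V : α → Language β) (Ls : Language (α ⊕ β))
    (Lt : Language β) : Prop :=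
  langSubst V Ls = Lt ∧ langSubst V Ls ≠ 0

/-- Lift of a target language over `β` to the extended target alphabet `Option β`
(with `none` the fresh separator `#`). -/
def liftTgt {β : Type*} (L : Language β) : Language (Option β) :=
  {w | ∃ s ∈ L, w = s.map some}

/-- Lift of a source language over `α ⊕ β` to the alphabet `α ⊕ Option β`. -/
def liftSrc {α β : Type*} (L : Language (α ⊕ β)) : Language (α ⊕ Option β) :=
  {w | ∃ s ∈ L, w = s.map (Sum.map id some)}

/-! ### Substitution of views -/

section Substitution

variable {α β : Type*}

theorem mem_langSubst {V : α → Language β} {L : Language (α ⊕ β)} {w : List β} :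
    w ∈ langSubst V L ↔ ∃ s ∈ L, w ∈ subst V s := by
  refine Set.mem_iUnion₂.trans ?_
  exact ⟨fun ⟨s, hs, hw⟩ => ⟨s, hs, hw⟩, fun ⟨s, hs, hw⟩ => ⟨s, hs, hw⟩⟩

theorem subst_append (V : α → Language β) (s t : List (α ⊕ β)) :
    subst V (s ++ t) = subst V s * subst V t := by
  simp [subst]

theorem langSubst_mul (V : α → Language β) (L M : Language (α ⊕ β)) :
    langSubst V (L * M) = langSubst V L * langSubst V M := by
  ext w
  simp only [mem_langSubst, Language.mem_mul]
  constructor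
  · rintro ⟨_, ⟨s, hs, t, ht, rfl⟩, hw⟩
    rw [subst_append, Language.mem_mul] at hw
    obtain ⟨a, ha, b, hb, rfl⟩ := hw
    exact ⟨a, ⟨s, hs, ha⟩, b, ⟨t, ht, hb⟩, rfl⟩
  · rintro ⟨a, ⟨s, hs, ha⟩, b, ⟨t, ht, hb⟩, rfl⟩
    refine ⟨s ++ t, ⟨s, hs, t, ht, rfl⟩, ?_⟩
    rw [subst_append]
    exact Language.append_mem_mul ha hb

theorem langSubst_singleton (V : α → Language β) (s : List (α ⊕ β)) :
    langSubst V {s} = subst V s := by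
  ext w
  rw [mem_langSubst]
  exact ⟨fun ⟨t, ht, hw⟩ => (Set.mem_singleton_iff.1 ht) ▸ hw,
    fun hw => ⟨s, Set.mem_singleton s, hw⟩⟩

theorem langSubst_one (V : α → Language β) : langSubst V 1 = 1 :=
  langSubst_singleton V []

theorem langSubst_list_prod (V : α → Language β) (l : List (Language (α ⊕ β))) :
    langSubst V l.prod = (l.map (langSubst V)).prod := by
  induction l with
  | nil => exact langSubst_one V
  | cons L l ih => simp [langSubst_mul, ih]

theorem liftTgt_eq_map (L : Language β) : liftTgt L = Language.map some L := by
  ext w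
  exact ⟨fun ⟨s, hs, h⟩ => ⟨s, hs, h.symm⟩, fun ⟨s, hs, h⟩ => ⟨s, hs, h.symm⟩⟩

theorem subst_lift (V : α → Language β) (s : List (α ⊕ β)) :
    subst (fun a => liftTgt (V a)) (s.map (Sum.map id some)) = liftTgt (subst V s) := by
  rw [liftTgt_eq_map, subst, subst, map_list_prod, List.map_map, List.map_map]
  congr 2
  funext c
  cases c with
  | inl a => exact liftTgt_eq_map (V a)
  | inr b => exact (Set.image_singleton (f := List.map some) (a := [b])).symm

theorem langSubst_liftSrc (V : α → Language β) (L : Language (α ⊕ β)) :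
    langSubst (fun a => liftTgt (V a)) (liftSrc L) = liftTgt (langSubst V L) := by
  ext w
  rw [mem_langSubst]
  constructor
  · rintro ⟨_, ⟨s, hs, rfl⟩, hw⟩
    rw [subst_lift] at hw
    obtain ⟨u, hu, rfl⟩ := hw
    exact ⟨u, mem_langSubst.2 ⟨s, hs, hu⟩, rfl⟩
  · rintro ⟨u, hu, rfl⟩
    obtain ⟨s, hs, hu⟩ := mem_langSubst.1 hu
    refine ⟨_, ⟨s, hs, rfl⟩, ?_⟩
    rw [subst_lift]
    exact ⟨u, hu, rfl⟩

end Substitution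

/-! ### Separated concatenations -/

section Separated

variable {β ι : Type*}

/-- The separated concatenation `lift A₀ · # · lift (A i₁) · # ⋯ # · lift (A iₙ)` for the list
`[i₁, …, iₙ]`. The first factor is kept apart so that it can vary in inductions on the list. -/
def sepProd (A₀ : Language β) (A : ι → Language β) (l : List ι) : Language (Option β) :=
  liftTgt A₀ * (l.map fun i => ({[none]} : Language (Option β)) * liftTgt (A i)).prod

theorem sepProd_nil (A₀ : Language β) (A : ι → Language β) :
    sepProd A₀ A [] = liftTgt A₀ := by
  simp [sepProd]

theorem mem_sepProd_cons {A₀ : Language β} {A : ι → Language β} {i : ι} {l : List ι}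
    {w : List (Option β)} :
    w ∈ sepProd A₀ A (i :: l) ↔
      ∃ u ∈ A₀, ∃ v ∈ sepProd (A i) A l, w = u.map some ++ none :: v := by
  have key : sepProd A₀ A (i :: l) = liftTgt A₀ * ({[none]} * sepProd (A i) A l) := by
    simp [sepProd, mul_assoc]
  rw [key]
  constructor
  · rintro ⟨_, ⟨u, hu, rfl⟩, _, ⟨x, hx, v, hv, rfl⟩, rfl⟩
    obtain rfl := Set.mem_singleton_iff.1 hx
    exact ⟨u, hu, v, hv, rfl⟩
  · rintro ⟨u, hu, v, hv, rfl⟩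
    exact ⟨_, ⟨u, hu, rfl⟩, _, ⟨_, Set.mem_singleton _, v, hv, rfl⟩, rfl⟩

/-- Unique parsing: the first occurrence of the separator splits the word. -/
theorem map_some_append_none_inj {u u' : List β} {v v' : List (Option β)}
    (h : u.map some ++ none :: v = u'.map some ++ none :: v') : u = u' ∧ v = v' := by
  induction u generalizing u' with
  | nil => cases u' <;> simp_all
  | cons a u ih =>
    cases u' with
    | nil => simp at h
    | cons b u' =>
      simp only [List.map_cons, List.cons_append, List.cons.injEq, Option.some.injEq] at h
      obtain ⟨rfl, rfl⟩ := ih h.2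
      exact ⟨by rw [h.1], rfl⟩

theorem map_some_mem_liftTgt {L : Language β} {u : List β} :
    u.map some ∈ liftTgt L ↔ u ∈ L := by
  constructor
  · rintro ⟨s, hs, h⟩
    rwa [List.map_injective_iff.2 (Option.some_injective β) h]
  · exact fun hu => ⟨u, hu, rfl⟩

theorem language_ne_zero_iff {γ : Type*} {L : Language γ} : L ≠ 0 ↔ ∃ w, w ∈ L :=
  Set.nonempty_iff_ne_empty.symm

theorem sepProd_ne_zero_iff (A₀ : Language β) (A : ι → Language β) (l : List ι) :
    sepProd A₀ A l ≠ 0 ↔ A₀ ≠ 0 ∧ ∀ i ∈ l, A i ≠ 0 := by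
  induction l generalizing A₀ with
  | nil =>
    simp only [sepProd_nil, List.not_mem_nil, false_imp_iff, implies_true, and_true,
      language_ne_zero_iff]
    exact ⟨fun ⟨_, u, hu, _⟩ => ⟨u, hu⟩, fun ⟨u, hu⟩ => ⟨_, u, hu, rfl⟩⟩
  | cons i l ih =>
    rw [List.forall_mem_cons, ← ih (A i)]
    simp only [language_ne_zero_iff, mem_sepProd_cons]
    exact ⟨fun ⟨_, u, hu, v, hv, _⟩ => ⟨⟨u, hu⟩, v, hv⟩,
      fun ⟨⟨u, hu⟩, v, hv⟩ => ⟨_, u, hu, v, hv, rfl⟩⟩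

theorem sepProd_le_iff (A₀ B₀ : Language β) (A B : ι → Language β) (l : List ι)
    (hne : sepProd A₀ A l ≠ 0) :
    sepProd A₀ A l ≤ sepProd B₀ B l ↔ A₀ ≤ B₀ ∧ ∀ i ∈ l, A i ≤ B i := by
  induction l generalizing A₀ B₀ with
  | nil =>
    simp only [sepProd_nil, List.not_mem_nil, false_imp_iff, implies_true, and_true]
    constructor
    · exact fun h u hu => map_some_mem_liftTgt.1 (h (map_some_mem_liftTgt.2 hu))
    · rintro h _ ⟨u, hu, rfl⟩
      exact ⟨u, h hu, rfl⟩
  | cons i l ih =>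
    obtain ⟨_, hw⟩ := language_ne_zero_iff.1 hne
    obtain ⟨u₀, hu₀, v₀, hv₀, -⟩ := mem_sepProd_cons.1 hw
    rw [List.forall_mem_cons, ← ih (A i) (B i) (language_ne_zero_iff.2 ⟨v₀, hv₀⟩)]
    constructor
    · intro h
      have parse : ∀ u ∈ A₀, ∀ v ∈ sepProd (A i) A l, u ∈ B₀ ∧ v ∈ sepProd (B i) B l := by
        intro u hu v hv
        obtain ⟨u₁, hu₁, v₁, hv₁, e⟩ :=
          mem_sepProd_cons.1 (h (mem_sepProd_cons.2 ⟨u, hu, v, hv, rfl⟩))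
        obtain ⟨rfl, rfl⟩ := map_some_append_none_inj e
        exact ⟨hu₁, hv₁⟩
      -- Nonemptiness supplies the complementary factor in each inclusion.
      exact ⟨fun u hu => (parse u hu v₀ hv₀).1, fun v hv => (parse u₀ hu₀ v hv).2⟩
    · rintro ⟨h₀, h₁⟩ w hw
      obtain ⟨u, hu, v, hv, rfl⟩ := mem_sepProd_cons.1 hw
      exact mem_sepProd_cons.2 ⟨u, h₀ hu, v, h₁ hv, rfl⟩

end Separated

/-! ### The combined mapping -/

/-- `sepProd_ne_zero_iff` for a family indexed by `Fin (h + 1)`. -/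
theorem sepProd_fin_ne_zero_iff {β : Type*} {h : ℕ} (A : Fin (h + 1) → Language β) :
    sepProd (A 0) (fun i : Fin h => A i.succ) (List.finRange h) ≠ 0 ↔ ∀ i, A i ≠ 0 := by
  rw [sepProd_ne_zero_iff, Fin.forall_fin_succ]
  simp

/-- `sepProd_le_iff` for families indexed by `Fin (h + 1)`. -/
theorem sepProd_fin_le_iff {β : Type*} {h : ℕ} (A B : Fin (h + 1) → Language β)
    (hne : ∀ i, A i ≠ 0) :
    sepProd (A 0) (fun i : Fin h => A i.succ) (List.finRange h) ≤
      sepProd (B 0) (fun i : Fin h => B i.succ) (List.finRange h) ↔ ∀ i, A i ≤ B i := by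
  rw [sepProd_le_iff _ _ _ _ _ ((sepProd_fin_ne_zero_iff A).2 hne), Fin.forall_fin_succ]
  simp

/-- Theorem "rpqs-single-mapping": the combined mapping obtained by concatenating the
given mappings with the fresh separator `#` (= `none`) is (exactly) captured by the
lifted views iff each of the given mappings is (exactly) captured by the views. -/
theorem rpqs_single_mapping {α β : Type*} (h : ℕ)
    (Ls : Fin (h + 1) → Language (α ⊕ β)) (Lt : Fin (h + 1) → Language β)
    (V : α → Language β) :
    let LMs : Language (α ⊕ Option β) :=
      liftSrc (Ls 0) *
        (((List.finRange h).map (fun i : Fin h =>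
          ({[Sum.inr (none : Option β)]} : Language (α ⊕ Option β)) *
            liftSrc (Ls i.succ))).prod)
    let LMt : Language (Option β) :=
      liftTgt (Lt 0) *
        (((List.finRange h).map (fun i : Fin h =>
          ({[(none : Option β)]} : Language (Option β)) * liftTgt (Lt i.succ))).prod)
    let Vup : α → Language (Option β) := fun a => liftTgt (V a)
    (Captures Vup LMs LMt ↔ ∀ i : Fin (h + 1), Captures V (Ls i) (Lt i)) ∧
    (ExactCaptures Vup LMs LMt ↔ ∀ i : Fin (h + 1), ExactCaptures V (Ls i) (Lt i)) := by
  intro LMs LMt Vup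
  have hs : langSubst Vup LMs = sepProd (langSubst V (Ls 0))
      (fun i : Fin h => langSubst V (Ls i.succ)) (List.finRange h) := by
    have hsep : langSubst Vup {[Sum.inr none]} = {[none]} := by
      rw [langSubst_singleton]
      simp [subst, viewHat]
    simp only [LMs, sepProd, langSubst_mul, langSubst_list_prod, List.map_map,
      Function.comp_def, hsep]
    simp only [Vup, langSubst_liftSrc]
  have ht : LMt = sepProd (Lt 0) (fun i : Fin h => Lt i.succ) (List.finRange h) := rfl
  have hne := sepProd_fin_ne_zero_iff fun i => langSubst V (Ls i)
  simp only [Captures, ExactCaptures, hs, ht, forall_and, hne]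
  refine ⟨and_congr_left fun hA => sepProd_fin_le_iff _ Lt hA, and_congr_left fun hA => ?_⟩
  constructor
  · intro e
    -- The common value is nonempty, so the target factors are nonempty as well.
    have hB : ∀ i, Lt i ≠ 0 := (sepProd_fin_ne_zero_iff Lt).1 (e ▸ hne.2 hA)
    exact fun i => le_antisymm ((sepProd_fin_le_iff _ Lt hA).1 e.le i)
      ((sepProd_fin_le_iff Lt (fun i => langSubst V (Ls i)) hB).1 e.ge i)
  · intro e
    simp only [e]
end

section
/- Deterministic automaton for (unions of) congruence classes: Let A be an NFA over β with state type σ. Define the DFA D_U whose states are the binary relations on σ (i.e., sets R ⊆ σ × σ), whose start state is the identity relation R_ε = {(p, p) : p ∈ σ}, whose transition on letter b sends R to R ⬝ R_A([b]) (relational composition with the transition relation of the one-letter word [b]), and whose accepting states form a given set U of relations. Then the language accepted by D_U is exactly {w : R_A(w) ∈ U}, the union of the congruence classes associated with the relations in U; in particular, when U = {R}, D_U accepts exactly the congruence class {w : R_A(w) = R}. -/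
/-- Relational composition of two binary relations on `σ` (as sets of pairs). -/
def relComp {σ : Type*} (R₁ R₂ : Set (σ × σ)) : Set (σ × σ) :=
  {pq | ∃ r : σ, (pq.1, r) ∈ R₁ ∧ (r, pq.2) ∈ R₂}

/-- The DFA whose states are binary relations on the states of the NFA `A`, whose start
state is the identity relation, whose transition on `b` composes with the transition
relation of `[b]`, and whose accepting states are the relations in `U`. -/
def ccDFA {β σ : Type*} (A : NFA β σ) (U : Set (Set (σ × σ))) : DFA β (Set (σ × σ)) where
  step := fun R b => relComp R (transRel A [b])
  start := {pq | pq.1 = pq.2}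
  accept := U

/-- The word-to-relation map turns concatenation into composition: a run on `u ++ v` splits at
the state reached after `u`. -/
theorem transRel_append {β σ : Type*} (A : NFA β σ) (u v : List β) :
    transRel A (u ++ v) = relComp (transRel A u) (transRel A v) := by
  ext ⟨p, q⟩
  simp only [transRel, relComp, Set.mem_ofPred_eq, NFA.evalFrom_append]
  exact NFA.mem_evalFrom_iff_exists

/-- The state of `ccDFA A U` after reading `w` is the transition relation of `w`. -/
theorem ccDFA_eval {β σ : Type*} (A : NFA β σ) (U : Set (Set (σ × σ))) (w : List β) :
    (ccDFA A U).eval w = transRel A w := by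
  induction w using List.reverseRecOn with
  | nil =>
    ext ⟨p, q⟩
    simp [ccDFA, transRel, eq_comm]
  | append_singleton w b ih =>
    rw [DFA.eval_append_singleton, ih, transRel_append]
    rfl

/-- The DFA `ccDFA A U` accepts exactly the union of the congruence classes associated
with the relations in `U`; in particular, for `U = {R}` it accepts exactly the
congruence class associated with `R`. -/
theorem ccDFA_accepts {β σ : Type*} (A : NFA β σ) :
    (∀ U : Set (Set (σ × σ)),
      (ccDFA A U).accepts = {w : List β | transRel A w ∈ U}) ∧
    (∀ R : Set (σ × σ),
      (ccDFA A {R}).accepts = {w : List β | transRel A w = R}) := by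
  have h (U : Set (Set (σ × σ))) :
      (ccDFA A U).accepts = {w : List β | transRel A w ∈ U} := by
    ext w
    rw [DFA.mem_accepts, ccDFA_eval]
    rfl
  exact ⟨h, fun R => h {R}⟩
end
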